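/- Cost upper bound for the static opaque selling policy (Corollary 1): Let R^s be the replenishment cycle length and D^s = Σ_{t=1}^{R^s} f_t·ω(t) the per-cycle discount count of the static opaque policy at stock level S, and let C^s = K/E[R^s] + (h/2)·(2NS + 1 − E[(R^s)²]/E[R^s]) + δ·E[D^s]/E[R^s]. Then there exist constants θ > 0 and c > 0, depending only on N and q, and S₀ ∈ ℕ such that for all S ≥ S₀ and all K > 0, h > 0, δ ∈ [0,1): C^s ≤ K/(NS − θ) + (h/2)·(NS + 1 + θ) + δ·q·c·√((log S)/S). -/

import Mathlib

/-!
The inventory part is soft: with `T = N(S-1)+1`, Jensen gives `E[R²]/E[R] ≥ E[R]`, and the flexing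
window has deterministic length about `c_s √(T log T)`, so that `E[D] ≤ q (c_s √(T log T) + 1)`.
Everything therefore reduces to `E[T - R] = O(1)` (`expec_hitTime_ge`).

The shortfall `T - R` counts the times `t < T` at which some bin already holds `S` balls. At such a
time the loads sum to `t`, so some ordered pair of bins has difference at least `(T - t)/N`
(`exists_pair_of_full`). It thus suffices to bound the tail of each pairwise difference
`D = x_i - x_j`, which behaves like a one-dimensional walk:

* an unflexed step leaves `D` without drift, so `E[exp(λ D(t))] ≤ (1 + λ²)^t`; with
  `λ = 2 √(log T / T)` this keeps `D` below `4 √(T log T)` until the window opens, except with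
  probability `1/T` (`tail_start`);
* at a flexed step with `x_i > x_j`, exchanging `i` for `j` in the flex sets shows that `j` is
  chosen more often than `i` by at least `q / C(N,2) = 2α` (`card_select_lt`, `drift_flex`), so that
  `E[exp(α D)]` contracts by `1 - α²` up to an additive constant (`expMoment_flex`).

Since `α c_s ≥ 5`, the window is long enough to dissipate the initial `exp(4 α √(T log T))`. Hence
`P(D(t) ≥ (T - t)/N) ≤ 2/T + C exp(-α (T - t)/N)` for every `t < T` (`tail_pair`), and the sum of
these bounds over `t < T` is bounded independently of `T`.
-/

attribute [local instance] Classical.propDecidable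

/-- An arrival type: (is-flex-ball, preferred bin, flex set). -/
abbrev Arrival (N : ℕ) := Bool × Fin N × Finset (Fin N)

/-- Mass of a single arrival: `f ~ Bernoulli(q)`, `p` uniform on `Fin N`,
`F` uniform on the 2-element subsets of `Fin N`, mutually independent. -/
noncomputable def arrivalProb (N : ℕ) (q : ℝ) (a : Arrival N) : ℝ :=
  (if a.1 then q else 1 - q) * (1 / (N : ℝ)) *
    (if a.2.2.card = 2 then 1 / (N.choose 2 : ℝ) else 0)

/-- Mass of a sequence of `T` i.i.d. arrivals. -/
noncomputable def seqMass (N T : ℕ) (q : ℝ) (xs : Fin T → Arrival N) : ℝ :=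
  ∏ t, arrivalProb N q (xs t)

/-- Expectation of a real random variable on the canonical space of `T` arrivals. -/
noncomputable def expec (N T : ℕ) (q : ℝ) (X : (Fin T → Arrival N) → ℝ) : ℝ :=
  ∑ xs : Fin T → Arrival N, seqMass N T q xs * X xs

/-- Probability of an event on the canonical space of `T` arrivals. -/
noncomputable def prob (N T : ℕ) (q : ℝ) (A : (Fin T → Arrival N) → Prop) : ℝ :=
  ∑ xs : Fin T → Arrival N, if A xs then seqMass N T q xs else 0

/-- The least-loaded bin in `F` (ties broken in favor of the smallest index). -/
noncomputable def argminBin {N : ℕ} [NeZero N] (x : Fin N → ℕ) (F : Finset (Fin N)) : Fin N :=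
  if hF : (F.filter fun i => ∀ j ∈ F, x i ≤ x j).Nonempty
  then (F.filter fun i => ∀ j ∈ F, x i ≤ x j).min' hF
  else 0

/-- One step of the greedy (least-loaded) allocation: if the ball is a flex ball and
flexing is exerted, it goes to the least-loaded bin of its flex set (lexicographic
tie-breaking); otherwise it goes to its preferred bin. -/
noncomputable def greedyStep {N : ℕ} [NeZero N] (flex : Bool) (a : Arrival N)
    (x : Fin N → ℕ) : Fin N → ℕ :=
  fun i => if i = (if a.1 && flex then argminBin x a.2.2 else a.2.1) then x i + 1 else x i

/-- Load process under a flexing rule `dec` (which may depend on the whole realization,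
the time, and the current loads), with greedy placement of flexed flex balls. -/
noncomputable def greedyLoads {N T : ℕ} [NeZero N]
    (dec : (Fin T → Arrival N) → ℕ → (Fin N → ℕ) → Bool)
    (xs : Fin T → Arrival N) : ℕ → Fin N → ℕ
  | 0 => fun _ => 0
  | t + 1 =>
    if h : t < T then
      greedyStep (dec xs t (greedyLoads dec xs t)) (xs ⟨t, h⟩) (greedyLoads dec xs t)
    else greedyLoads dec xs t

/-- The maximum load over all bins. -/
noncomputable def maxLoad {N : ℕ} (x : Fin N → ℕ) : ℕ := Finset.univ.sup x

/-- `Gap(t)` : maximum load minus the average load `t/N`. -/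
noncomputable def gap {N : ℕ} (x : Fin N → ℕ) (t : ℕ) : ℝ :=
  (maxLoad x : ℝ) - (t : ℝ) / (N : ℝ)

/-- Number of flexed balls `M = ∑_t f_t ω(t)`. -/
noncomputable def numFlexed {N T : ℕ} [NeZero N]
    (dec : (Fin T → Arrival N) → ℕ → (Fin N → ℕ) → Bool) (xs : Fin T → Arrival N) : ℕ :=
  ∑ t : Fin T, if (xs t).1 && dec xs (t : ℕ) (greedyLoads dec xs (t : ℕ)) then 1 else 0

/-- Flexing rule of a "static"-type policy: flex exactly from period
`T - c·√(T log T)` on (ball `t` corresponds to step index `t-1`). -/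
noncomputable def lateDec (N T : ℕ) (c : ℝ) :
    (Fin T → Arrival N) → ℕ → (Fin N → ℕ) → Bool :=
  fun _ s _ =>
    if (T : ℝ) - c * Real.sqrt ((T : ℝ) * Real.log (T : ℝ)) ≤ ((s : ℝ) + 1) then true else false

/-- Flexing rule of the dynamic policy: flex at period `t = s+1` iff the current gap
`Gap(t-1)` is at least `a_d (T - t) q / N` with `a_d = 1/(5 C(N,2))`. -/
noncomputable def dynDec (N T : ℕ) (q : ℝ) :
    (Fin T → Arrival N) → ℕ → (Fin N → ℕ) → Bool :=
  fun _ s x =>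
    if (1 / (5 * (N.choose 2 : ℝ))) * ((T : ℝ) - ((s : ℝ) + 1)) * q / (N : ℝ) ≤ gap x s
    then true else false

/-- First time (within horizon `T`) at which the maximum load equals `S`. -/
noncomputable def hitTime {N : ℕ} (T S : ℕ) (x : ℕ → Fin N → ℕ) : ℕ :=
  if h : ((Finset.range (T + 1)).filter fun t => maxLoad (x t) = S).Nonempty
  then ((Finset.range (T + 1)).filter fun t => maxLoad (x t) = S).min' h
  else T

/-- The dynamic opaque policy: the flag records whether the trigger condition
`Gap(t) ≥ c_d (T-t) q / N` (with `c_d = 1/(10 C(N,2))`) has held at some time `≤ t`;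
from then on every flex ball is flexed (greedy placement). Returns (flag, loads). -/
noncomputable def dynOpaque (N T : ℕ) [NeZero N] (q : ℝ) (xs : Fin T → Arrival N) :
    ℕ → Bool × (Fin N → ℕ)
  | 0 =>
    (if (1 / (10 * (N.choose 2 : ℝ))) * (T : ℝ) * q / (N : ℝ) ≤ 0 then true else false,
      fun _ => 0)
  | t + 1 =>
    let p := dynOpaque N T q xs t
    let x' := if h : t < T then greedyStep p.1 (xs ⟨t, h⟩) p.2 else p.2
    (p.1 ||
      (if (1 / (10 * (N.choose 2 : ℝ))) * ((T : ℝ) - ((t : ℝ) + 1)) * q / (N : ℝ) ≤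
          gap x' (t + 1)
       then true else false),
     x')

/-- Number of flexed balls `D = ∑_{t=1}^{R} f_t ω(t)` during one replenishment cycle,
for a policy given by the flexing rule `dec`. -/
noncomputable def cycleFlexCount (N T : ℕ) [NeZero N]
    (dec : (Fin T → Arrival N) → ℕ → (Fin N → ℕ) → Bool) (S : ℕ)
    (xs : Fin T → Arrival N) : ℕ :=
  ∑ t ∈ Finset.range (hitTime T S (greedyLoads dec xs)),
    if h : t < T then (if (xs ⟨t, h⟩).1 && dec xs t (greedyLoads dec xs t) then 1 else 0)
    else 0

/-- Number of flexed balls during one replenishment cycle of the dynamic opaque policy. -/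
noncomputable def dynFlexCount (N T : ℕ) [NeZero N] (q : ℝ) (S : ℕ)
    (xs : Fin T → Arrival N) : ℕ :=
  ∑ t ∈ Finset.range (hitTime T S fun u => (dynOpaque N T q xs u).2),
    if h : t < T then (if (xs ⟨t, h⟩).1 && (dynOpaque N T q xs t).1 then 1 else 0) else 0

/-- The static-opaque flexing threshold constant `c_s = 2√6 N(N-1)(N+1)/q + 4N`. -/
noncomputable def csOpaque (N : ℕ) (q : ℝ) : ℝ :=
  2 * Real.sqrt 6 * (N : ℝ) * ((N : ℝ) - 1) * ((N : ℝ) + 1) / q + 4 * (N : ℝ)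

/-- Expected cycle length `E[R^s]` of the static opaque policy at stock level `S`. -/
noncomputable def staticER (N : ℕ) [NeZero N] (q : ℝ) (S : ℕ) : ℝ :=
  expec N (N * (S - 1) + 1) q fun xs =>
    (hitTime (N * (S - 1) + 1) S
      (greedyLoads (lateDec N (N * (S - 1) + 1) (csOpaque N q)) xs) : ℝ)

/-- Second moment `E[(R^s)²]` of the static opaque cycle length at stock level `S`. -/
noncomputable def staticER2 (N : ℕ) [NeZero N] (q : ℝ) (S : ℕ) : ℝ :=
  expec N (N * (S - 1) + 1) q fun xs =>
    ((hitTime (N * (S - 1) + 1) S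
      (greedyLoads (lateDec N (N * (S - 1) + 1) (csOpaque N q)) xs) : ℝ)) ^ 2

/-- Expected per-cycle discount count `E[D^s]` of the static opaque policy. -/
noncomputable def staticED (N : ℕ) [NeZero N] (q : ℝ) (S : ℕ) : ℝ :=
  expec N (N * (S - 1) + 1) q fun xs =>
    (cycleFlexCount N (N * (S - 1) + 1)
      (lateDec N (N * (S - 1) + 1) (csOpaque N q)) S xs : ℝ)

/-- Long-run average cost `C^s` of the static opaque policy. -/
noncomputable def staticCost (N : ℕ) [NeZero N] (q K h δ : ℝ) (S : ℕ) : ℝ :=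
  K / staticER N q S +
    (h / 2) * (2 * (N : ℝ) * (S : ℝ) + 1 - staticER2 N q S / staticER N q S) +
    δ * staticED N q S / staticER N q S

/-! ### The product measure on arrival sequences -/

lemma arrivalProb_nonneg {N : ℕ} {q : ℝ} (hq0 : 0 < q) (hq1 : q ≤ 1) (a : Arrival N) :
    0 ≤ arrivalProb N q a := by
  unfold arrivalProb
  have : 0 ≤ 1 - q := by linarith
  positivity

lemma seqMass_nonneg {N T : ℕ} {q : ℝ} (hq0 : 0 < q) (hq1 : q ≤ 1) (xs : Fin T → Arrival N) :
    0 ≤ seqMass N T q xs :=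
  Finset.prod_nonneg fun t _ => arrivalProb_nonneg hq0 hq1 (xs t)

lemma choose_two_pos {N : ℕ} (hN : 2 ≤ N) : (0 : ℝ) < (N.choose 2 : ℝ) := by
  exact_mod_cast Nat.choose_pos hN

lemma sum_flexSet_weight {N : ℕ} (hN : 2 ≤ N) :
    ∑ F : Finset (Fin N), (if F.card = 2 then 1 / (N.choose 2 : ℝ) else 0) = 1 := by
  rw [← Finset.sum_filter, Finset.sum_const, nsmul_eq_mul]
  have h : (Finset.univ.filter fun F : Finset (Fin N) => F.card = 2).card = N.choose 2 := by
    have := Fintype.card_finset_len (α := Fin N) 2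
    rw [Fintype.card_fin] at this
    rw [← this, Fintype.card_subtype]
  rw [h]
  have := choose_two_pos hN
  field_simp

/-- Averaging a function of one arrival: condition on whether the ball is a flex ball. -/
lemma sum_arrivalProb_mul {N : ℕ} (q : ℝ) (g : Arrival N → ℝ) :
    ∑ a, arrivalProb N q a * g a =
      q * ∑ p : Fin N, (1 / (N : ℝ)) * ∑ F : Finset (Fin N),
        (if F.card = 2 then 1 / (N.choose 2 : ℝ) else 0) * g (true, p, F) +
      (1 - q) * ∑ p : Fin N, (1 / (N : ℝ)) * ∑ F : Finset (Fin N),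
        (if F.card = 2 then 1 / (N.choose 2 : ℝ) else 0) * g (false, p, F) := by
  simp only [Fintype.sum_prod_type, Fintype.sum_bool, arrivalProb, Finset.mul_sum]
  simp [mul_assoc]

lemma sum_arrivalProb {N : ℕ} (hN : 2 ≤ N) (q : ℝ) : ∑ a, arrivalProb N q a = 1 := by
  have h := sum_arrivalProb_mul (N := N) q (fun _ => 1)
  simp only [mul_one, sum_flexSet_weight hN] at h
  rw [h]
  have : (N : ℝ) ≠ 0 := by positivity
  simp [this]

lemma sum_seqMass {N T : ℕ} (hN : 2 ≤ N) (q : ℝ) :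
    ∑ xs : Fin T → Arrival N, seqMass N T q xs = 1 := by
  unfold seqMass
  have h := (Finset.prod_univ_sum (fun _ : Fin T => (Finset.univ : Finset (Arrival N)))
    (fun _ a => arrivalProb N q a)).symm
  rw [Fintype.piFinset_univ] at h
  simpa [sum_arrivalProb hN q] using h

lemma expec_mono {N T : ℕ} {q : ℝ} (hq0 : 0 < q) (hq1 : q ≤ 1)
    {X Y : (Fin T → Arrival N) → ℝ} (h : ∀ xs, X xs ≤ Y xs) :
    expec N T q X ≤ expec N T q Y :=
  Finset.sum_le_sum fun xs _ => mul_le_mul_of_nonneg_left (h xs) (seqMass_nonneg hq0 hq1 xs)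

lemma expec_const {N T : ℕ} (hN : 2 ≤ N) (q b : ℝ) :
    expec N T q (fun _ => b) = b := by
  unfold expec
  rw [← Finset.sum_mul, sum_seqMass hN, one_mul]

lemma expec_add {N T : ℕ} (q : ℝ) (X Y : (Fin T → Arrival N) → ℝ) :
    expec N T q (fun xs => X xs + Y xs) = expec N T q X + expec N T q Y := by
  simp only [expec, mul_add, Finset.sum_add_distrib]

lemma expec_mul_const {N T : ℕ} (q b : ℝ) (X : (Fin T → Arrival N) → ℝ) :
    expec N T q (fun xs => X xs * b) = expec N T q X * b := by
  simp only [expec, ← mul_assoc, Finset.sum_mul]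

lemma expec_sum {N T : ℕ} (q : ℝ) {ι : Type*} (s : Finset ι)
    (X : ι → (Fin T → Arrival N) → ℝ) :
    expec N T q (fun xs => ∑ k ∈ s, X k xs) = ∑ k ∈ s, expec N T q (X k) := by
  simp only [expec, Finset.mul_sum]
  exact Finset.sum_comm

lemma expec_nonneg {N T : ℕ} {q : ℝ} (hq0 : 0 < q) (hq1 : q ≤ 1)
    {X : (Fin T → Arrival N) → ℝ} (h : ∀ xs, 0 ≤ X xs) : 0 ≤ expec N T q X :=
  Finset.sum_nonneg fun xs _ => mul_nonneg (seqMass_nonneg hq0 hq1 xs) (h xs)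

lemma seqMass_update {N T : ℕ} (q : ℝ) (xs : Fin T → Arrival N) (t : Fin T) (a : Arrival N) :
    seqMass N T q (Function.update xs t a) * arrivalProb N q (xs t) =
      seqMass N T q xs * arrivalProb N q a := by
  unfold seqMass
  rw [← Finset.mul_prod_erase Finset.univ _ (Finset.mem_univ t),
    ← Finset.mul_prod_erase Finset.univ (fun s => arrivalProb N q (xs s)) (Finset.mem_univ t)]
  have : ∏ s ∈ Finset.univ.erase t, arrivalProb N q (Function.update xs t a s) =
      ∏ s ∈ Finset.univ.erase t, arrivalProb N q (xs s) := by
    refine Finset.prod_congr rfl fun s hs => ?_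
    rw [Function.update_of_ne (Finset.ne_of_mem_erase hs)]
  rw [this, Function.update_self]
  ring

/-- Fubini in the `t`-th coordinate: if `G · a` ignores the `t`-th arrival, then that arrival may
be averaged out first. The reindexing is the measure-preserving involution swapping `xs t` with an
independent copy `a`. -/
lemma expec_coord {N T : ℕ} (hN : 2 ≤ N) (q : ℝ) (t : Fin T)
    (G : (Fin T → Arrival N) → Arrival N → ℝ)
    (hG : ∀ xs a b, G (Function.update xs t b) a = G xs a) :
    expec N T q (fun xs => G xs (xs t)) =
      expec N T q (fun xs => ∑ a, arrivalProb N q a * G xs a) := by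
  unfold expec
  have h1 : ∑ xs : Fin T → Arrival N, seqMass N T q xs * G xs (xs t) =
      ∑ z : (Fin T → Arrival N) × Arrival N,
        seqMass N T q z.1 * arrivalProb N q z.2 * G z.1 (z.1 t) := by
    rw [Fintype.sum_prod_type]
    refine Finset.sum_congr rfl fun xs _ => ?_
    simp only
    rw [← Finset.sum_mul, ← Finset.mul_sum, sum_arrivalProb hN, mul_one]
  have h2 : ∑ xs : Fin T → Arrival N, seqMass N T q xs * ∑ a, arrivalProb N q a * G xs a =
      ∑ z : (Fin T → Arrival N) × Arrival N,
        seqMass N T q z.1 * arrivalProb N q z.2 * G z.1 z.2 := by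
    rw [Fintype.sum_prod_type]
    refine Finset.sum_congr rfl fun xs _ => ?_
    rw [Finset.mul_sum]
    exact Finset.sum_congr rfl fun a _ => by ring
  rw [h1, h2]
  refine Finset.sum_nbij' (fun z => (Function.update z.1 t z.2, z.1 t))
    (fun z => (Function.update z.1 t z.2, z.1 t)) (by simp) (by simp) (by simp) (by simp) ?_
  rintro ⟨xs, a⟩ -
  simp only [hG, seqMass_update]

/-! ### One step of the load process -/

/-- The bin receiving a ball of type `a` in state `x`. -/
noncomputable def chosenBin {N : ℕ} [NeZero N] (flex : Bool) (a : Arrival N) (x : Fin N → ℕ) :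
    Fin N :=
  if a.1 && flex then argminBin x a.2.2 else a.2.1

/-- The load difference of the ordered pair of bins `(i, j)`. -/
def pairDiff {N : ℕ} (i j : Fin N) (x : Fin N → ℕ) : ℝ := (x i : ℝ) - (x j : ℝ)

/-- The signed change of `pairDiff i j` when bin `b` receives a ball. -/
noncomputable def pairInc {N : ℕ} (i j b : Fin N) : ℝ :=
  (if b = i then 1 else 0) - (if b = j then 1 else 0)

lemma pairDiff_greedyStep {N : ℕ} [NeZero N] (flex : Bool) (a : Arrival N) (x : Fin N → ℕ)
    (i j : Fin N) :
    pairDiff i j (greedyStep flex a x) = pairDiff i j x + pairInc i j (chosenBin flex a x) := by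
  unfold pairDiff pairInc greedyStep chosenBin
  simp only [eq_comm (a := i), eq_comm (a := j)]
  split_ifs <;> push_cast <;> ring

lemma argminBin_mem {N : ℕ} [NeZero N] (x : Fin N → ℕ) {F : Finset (Fin N)} (hF : F.Nonempty) :
    argminBin x F ∈ F ∧ ∀ k ∈ F, x (argminBin x F) ≤ x k := by
  have hne : (F.filter fun i => ∀ j ∈ F, x i ≤ x j).Nonempty := by
    obtain ⟨m, hm, hmin⟩ := F.exists_min_image x hF
    exact ⟨m, Finset.mem_filter.2 ⟨hm, hmin⟩⟩
  unfold argminBin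
  rw [dif_pos hne]
  have := Finset.min'_mem _ hne
  exact Finset.mem_filter.1 this

/-- Replacing the heavier bin `i` by the lighter bin `j` maps flex sets that select `i` injectively
to flex sets that select `j`; the pair `{i, j}` is missed by this map and selects `j`. -/
lemma card_select_lt {N : ℕ} [NeZero N] (x : Fin N → ℕ) {i j : Fin N} (hij : x j < x i) :
    (Finset.univ.filter fun F : Finset (Fin N) => F.card = 2 ∧ argminBin x F = i).card + 1 ≤
      (Finset.univ.filter fun F : Finset (Fin N) => F.card = 2 ∧ argminBin x F = j).card := by
  set A := Finset.univ.filter fun F : Finset (Fin N) => F.card = 2 ∧ argminBin x F = i with hA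
  have hne : i ≠ j := fun h => by simp [h] at hij
  have key : ∀ F ∈ A, i ∈ F ∧ j ∉ F ∧ F.card = 2 ∧ ∀ k ∈ F, x i ≤ x k := by
    intro F hF
    obtain ⟨hc, harg⟩ := (Finset.mem_filter.1 hF).2
    have hFne : F.Nonempty := Finset.card_pos.1 (by omega)
    have h := argminBin_mem x hFne
    rw [harg] at h
    exact ⟨h.1, fun hj => by have := h.2 j hj; omega, hc, h.2⟩
  have sel : ∀ F : Finset (Fin N), j ∈ F → (∀ k ∈ F, k ≠ j → x j < x k) → argminBin x F = j := by
    intro F hj hlt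
    by_contra hcon
    have h := argminBin_mem x ⟨j, hj⟩
    have h1 := hlt _ h.1 hcon
    have h2 := h.2 j hj
    omega
  have hinj : Set.InjOn (fun F : Finset (Fin N) => insert j (F.erase i)) A := by
    intro F hF G hG hFG
    have kF := key F hF
    have kG := key G hG
    ext k
    have hk := Finset.ext_iff.1 hFG k
    simp only [Finset.mem_insert, Finset.mem_erase] at hk
    by_cases hki : k = i
    · subst hki; simp [kF.1, kG.1]
    by_cases hkj : k = j
    · subst hkj; simp [kF.2.1, kG.2.1]
    · simpa [hki, hkj] using hk
  rw [← Finset.card_image_of_injOn hinj]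
  have hnot : ({i, j} : Finset (Fin N)) ∉ A.image (fun F => insert j (F.erase i)) := by
    intro hmem
    obtain ⟨F, _, hF⟩ := Finset.mem_image.1 hmem
    have : i ∈ insert j (F.erase i) := by rw [hF]; simp
    simp [hne] at this
  rw [← Finset.card_insert_of_notMem hnot]
  refine Finset.card_le_card ?_
  intro G hG
  rw [Finset.mem_insert] at hG
  refine Finset.mem_filter.2 ⟨Finset.mem_univ _, ?_⟩
  rcases hG with rfl | hG
  · refine ⟨Finset.card_pair hne, sel _ (by simp) ?_⟩
    intro k hk hkj
    rcases Finset.mem_insert.1 hk with rfl | hk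
    · exact hij
    · exact absurd (Finset.mem_singleton.1 hk) hkj
  · obtain ⟨F, hF, rfl⟩ := Finset.mem_image.1 hG
    have kF := key F hF
    refine ⟨?_, sel _ (by simp) ?_⟩
    · rw [Finset.card_insert_of_notMem (by simp [kF.2.1]), Finset.card_erase_of_mem kF.1]
      omega
    · intro k hk hkj
      rcases Finset.mem_insert.1 hk with h | hk
      · exact absurd h hkj
      · exact lt_of_lt_of_le hij (kF.2.2.2 k (Finset.mem_of_mem_erase hk))

lemma sum_pairInc {N : ℕ} (i j : Fin N) : ∑ p : Fin N, pairInc i j p = 0 := by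
  simp [pairInc, Finset.sum_sub_distrib]

/-- The expected change of `pairDiff i j` vanishes when the ball is not flexed. -/
lemma drift_noflex {N : ℕ} [NeZero N] (hN : 2 ≤ N) (q : ℝ) (x : Fin N → ℕ) (i j : Fin N) :
    ∑ a, arrivalProb N q a * pairInc i j (chosenBin false a x) = 0 := by
  rw [sum_arrivalProb_mul]
  simp only [chosenBin, Bool.and_false, Bool.false_eq_true, if_false, ← Finset.sum_mul,
    sum_flexSet_weight hN, one_mul, ← Finset.mul_sum, sum_pairInc, mul_zero, add_zero]

/-- If `i` is strictly heavier than `j`, flexing pulls `pairDiff i j` down at rate at least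
`q / C(N,2)`. -/
lemma drift_flex {N : ℕ} [NeZero N] (hN : 2 ≤ N) {q : ℝ} (hq0 : 0 < q) (x : Fin N → ℕ)
    {i j : Fin N} (hij : x j < x i) :
    ∑ a, arrivalProb N q a * pairInc i j (chosenBin true a x) ≤ -(q / (N.choose 2 : ℝ)) := by
  rw [sum_arrivalProb_mul]
  simp only [chosenBin, Bool.and_true, Bool.false_eq_true, if_false, if_true, ← Finset.sum_mul,
    sum_flexSet_weight hN, one_mul, ← Finset.mul_sum, sum_pairInc, mul_zero, add_zero]
  have hNR : (N : ℝ) ≠ 0 := by positivity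
  have hC := choose_two_pos hN
  have h1 : ∑ p : Fin N, (1 / (N : ℝ)) = 1 := by simp [hNR]
  have h2 : ∑ F : Finset (Fin N), (if F.card = 2 then 1 / (N.choose 2 : ℝ) else 0) *
      pairInc i j (argminBin x F) =
      (1 / (N.choose 2 : ℝ)) *
      (((Finset.univ.filter fun F : Finset (Fin N) => F.card = 2 ∧ argminBin x F = i).card : ℝ) -
      ((Finset.univ.filter fun F : Finset (Fin N) => F.card = 2 ∧ argminBin x F = j).card : ℝ))
      := by
    rw [Finset.card_filter, Finset.card_filter]
    push_cast
    rw [← Finset.sum_sub_distrib, Finset.mul_sum]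
    refine Finset.sum_congr rfl fun F _ => ?_
    unfold pairInc
    by_cases hc : F.card = 2 <;> simp [hc]
  have h3 := card_select_lt x hij
  have h4 : ((Finset.univ.filter fun F : Finset (Fin N) =>
      F.card = 2 ∧ argminBin x F = i).card : ℝ) + 1 ≤
      ((Finset.univ.filter fun F : Finset (Fin N) =>
      F.card = 2 ∧ argminBin x F = j).card : ℝ) := by exact_mod_cast h3
  rw [h1, one_mul, h2]
  have h5 : q / (N.choose 2 : ℝ) = q * (1 / (N.choose 2 : ℝ)) := by ring
  rw [h5, ← mul_neg]
  refine mul_le_mul_of_nonneg_left ?_ hq0.le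
  have : 0 < 1 / (N.choose 2 : ℝ) := by positivity
  nlinarith

lemma exp_mul_pairInc_le {N : ℕ} (i j b : Fin N) {lam : ℝ} (h0 : 0 ≤ lam) (h1 : lam ≤ 1) :
    Real.exp (lam * pairInc i j b) ≤ 1 + lam * pairInc i j b + lam ^ 2 := by
  have hle : |pairInc i j b| ≤ 1 := by
    unfold pairInc
    split_ifs <;> norm_num
  have hz : |lam * pairInc i j b| ≤ 1 := by
    rw [abs_mul, abs_of_nonneg h0]
    exact mul_le_one₀ h1 (abs_nonneg _) hle
  have h := (abs_le.1 (Real.abs_exp_sub_one_sub_id_le hz)).2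
  have hsq : (lam * pairInc i j b) ^ 2 ≤ lam ^ 2 := by
    rw [mul_pow]
    have : pairInc i j b ^ 2 ≤ 1 := by rw [sq_le_one_iff_abs_le_one]; exact hle
    nlinarith [sq_nonneg lam]
  linarith

/-- One-step bound on the exponential moment of a pairwise difference in terms of its drift. -/
lemma expMoment_step {N : ℕ} [NeZero N] (hN : 2 ≤ N) {q : ℝ} (hq0 : 0 < q) (hq1 : q ≤ 1)
    (flex : Bool) (x : Fin N → ℕ) (i j : Fin N) {lam : ℝ} (h0 : 0 ≤ lam) (h1 : lam ≤ 1) :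
    ∑ a, arrivalProb N q a * Real.exp (lam * pairDiff i j (greedyStep flex a x)) ≤
      Real.exp (lam * pairDiff i j x) * (1 + lam ^ 2 +
        lam * ∑ a, arrivalProb N q a * pairInc i j (chosenBin flex a x)) := by
  have hR : Real.exp (lam * pairDiff i j x) * (1 + lam ^ 2 +
        lam * ∑ a, arrivalProb N q a * pairInc i j (chosenBin flex a x)) =
      ∑ a, arrivalProb N q a * (Real.exp (lam * pairDiff i j x) *
        (1 + lam * pairInc i j (chosenBin flex a x) + lam ^ 2)) := by
    have hsum := sum_arrivalProb hN q
    have : ∀ a, arrivalProb N q a * (Real.exp (lam * pairDiff i j x) *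
        (1 + lam * pairInc i j (chosenBin flex a x) + lam ^ 2)) =
        Real.exp (lam * pairDiff i j x) * (1 + lam ^ 2) * arrivalProb N q a +
        Real.exp (lam * pairDiff i j x) * lam *
          (arrivalProb N q a * pairInc i j (chosenBin flex a x)) := fun a => by ring
    simp only [this]
    rw [Finset.sum_add_distrib, ← Finset.mul_sum, ← Finset.mul_sum, hsum]
    ring
  rw [hR]
  refine Finset.sum_le_sum fun a _ => ?_
  refine mul_le_mul_of_nonneg_left ?_ (arrivalProb_nonneg hq0 hq1 a)
  rw [pairDiff_greedyStep, mul_add, Real.exp_add]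
  exact mul_le_mul_of_nonneg_left (exp_mul_pairInc_le i j _ h0 h1) (Real.exp_pos _).le

lemma expMoment_step_noflex {N : ℕ} [NeZero N] (hN : 2 ≤ N) {q : ℝ} (hq0 : 0 < q) (hq1 : q ≤ 1)
    (x : Fin N → ℕ) (i j : Fin N) {lam : ℝ} (h0 : 0 ≤ lam) (h1 : lam ≤ 1) :
    ∑ a, arrivalProb N q a * Real.exp (lam * pairDiff i j (greedyStep false a x)) ≤
      Real.exp (lam * pairDiff i j x) * (1 + lam ^ 2) := by
  have h := expMoment_step hN hq0 hq1 false x i j h0 h1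
  rwa [drift_noflex hN, mul_zero, add_zero] at h

/-- The exponent `α` used in the flexing window: half of the pairwise drift `q / C(N,2)`. -/
noncomputable def rateA (N : ℕ) (q : ℝ) : ℝ := q / (N.choose 2 : ℝ) / 2

lemma rateA_pos {N : ℕ} (hN : 2 ≤ N) {q : ℝ} (hq0 : 0 < q) : 0 < rateA N q := by
  have := choose_two_pos hN
  unfold rateA
  positivity

lemma rateA_eq {N : ℕ} (hN : 2 ≤ N) (q : ℝ) :
    rateA N q = q / ((N : ℝ) * ((N : ℝ) - 1)) := by
  have h2 : (2 : ℝ) ≤ N := by exact_mod_cast hN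
  have h3 : (N : ℝ) - 1 ≠ 0 := by linarith
  unfold rateA
  rw [Nat.cast_choose_two]
  field_simp

lemma rateA_le {N : ℕ} (hN : 2 ≤ N) {q : ℝ} (hq1 : q ≤ 1) :
    rateA N q ≤ 1 / (N : ℝ) := by
  have h2 : (2 : ℝ) ≤ N := by exact_mod_cast hN
  rw [rateA_eq hN]
  have : (0 : ℝ) < (N : ℝ) - 1 := by linarith
  rw [div_le_div_iff₀ (by positivity) (by positivity)]
  nlinarith

lemma rateA_le_half {N : ℕ} (hN : 2 ≤ N) {q : ℝ} (hq1 : q ≤ 1) :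
    rateA N q ≤ 1 / 2 := by
  refine (rateA_le hN hq1).trans ?_
  have h2 : (2 : ℝ) ≤ N := by exact_mod_cast hN
  exact one_div_le_one_div_of_le (by norm_num) h2

/-- With exponent `α = rateA N q`, a flexed step contracts the exponential moment by `1 - α²` up
to an additive constant: the drift `-2α` beats the second-order term `α²` when `i` is heavier
than `j`, and otherwise the new moment is at most `e^α`. -/
lemma expMoment_step_flex {N : ℕ} [NeZero N] (hN : 2 ≤ N) {q : ℝ} (hq0 : 0 < q) (hq1 : q ≤ 1)
    (x : Fin N → ℕ) (i j : Fin N) :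
    ∑ a, arrivalProb N q a *
        Real.exp (rateA N q * pairDiff i j (greedyStep true a x)) ≤
      (1 - rateA N q ^ 2) * Real.exp (rateA N q * pairDiff i j x) + Real.exp 1 := by
  have hpos := rateA_pos hN hq0
  have hhalf := rateA_le_half hN hq1
  set α := rateA N q with hα
  have hexp := Real.exp_pos (α * pairDiff i j x)
  by_cases hij : x j < x i
  · have h := expMoment_step hN hq0 hq1 true x i j hpos.le (by linarith)
    have hd := drift_flex hN hq0 x hij
    have h2 : q / (N.choose 2 : ℝ) = 2 * α := by rw [hα, rateA]; ring
    rw [h2] at hd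
    have h3 : 1 + α ^ 2 + α * ∑ a, arrivalProb N q a * pairInc i j (chosenBin true a x) ≤
        1 - α ^ 2 := by nlinarith
    have h4 := mul_le_mul_of_nonneg_left h3 hexp.le
    have := Real.exp_pos 1
    linarith
  · have hle : pairDiff i j x ≤ 0 := by
      have : (x i : ℝ) ≤ x j := by exact_mod_cast not_lt.1 hij
      unfold pairDiff; linarith
    have hb : ∀ a : Arrival N,
        Real.exp (α * pairDiff i j (greedyStep true a x)) ≤ Real.exp 1 := by
      intro a
      refine Real.exp_le_exp.2 ?_
      rw [pairDiff_greedyStep]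
      have : pairInc i j (chosenBin true a x) ≤ 1 := by
        unfold pairInc; split_ifs <;> norm_num
      nlinarith
    calc _ ≤ ∑ a, arrivalProb N q a * Real.exp 1 :=
          Finset.sum_le_sum fun a _ =>
            mul_le_mul_of_nonneg_left (hb a) (arrivalProb_nonneg hq0 hq1 a)
      _ = Real.exp 1 := by rw [← Finset.sum_mul, sum_arrivalProb hN, one_mul]
      _ ≤ _ := by
          have : 0 ≤ 1 - α ^ 2 := by nlinarith
          nlinarith [mul_nonneg this hexp.le]

/-! ### The load process under a deterministic flexing schedule -/

/-- Loads when ball `s + 1` is flexed according to the deterministic schedule `ω s`. -/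
noncomputable abbrev loads {N T : ℕ} [NeZero N] (ω : ℕ → Bool) (xs : Fin T → Arrival N) (t : ℕ) :
    Fin N → ℕ :=
  greedyLoads (fun _ s _ => ω s) xs t

lemma loads_succ {N T : ℕ} [NeZero N] (ω : ℕ → Bool) (xs : Fin T → Arrival N) {t : ℕ}
    (h : t < T) : loads ω xs (t + 1) = greedyStep (ω t) (xs ⟨t, h⟩) (loads ω xs t) := by
  simp [loads, greedyLoads, h]

lemma loads_update {N T : ℕ} [NeZero N] (ω : ℕ → Bool) (xs : Fin T → Arrival N) (s : Fin T)
    (a : Arrival N) (t : ℕ) (hts : t ≤ s) :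
    loads ω (Function.update xs s a) t = loads ω xs t := by
  induction t with
  | zero => rfl
  | succ t ih =>
    have hT : t < T := by have := s.2; omega
    rw [loads_succ ω _ hT, loads_succ ω _ hT, ih (by omega)]
    rw [Function.update_of_ne]
    intro h
    have := congrArg Fin.val h
    simp at this
    omega

lemma sum_greedyStep {N : ℕ} [NeZero N] (flex : Bool) (a : Arrival N) (x : Fin N → ℕ) :
    ∑ i, greedyStep flex a x i = ∑ i, x i + 1 := by
  unfold greedyStep
  have : ∀ i b : Fin N, (if i = b then x i + 1 else x i) = x i + if i = b then 1 else 0 := by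
    intro i b; split_ifs <;> simp
  simp only [this, Finset.sum_add_distrib]
  simp

lemma sum_loads {N T : ℕ} [NeZero N] (ω : ℕ → Bool) (xs : Fin T → Arrival N) {t : ℕ}
    (h : t ≤ T) : ∑ i, loads ω xs t i = t := by
  induction t with
  | zero => simp [loads, greedyLoads]
  | succ t ih => rw [loads_succ ω xs (by omega), sum_greedyStep, ih (by omega)]

lemma loads_mono {N T : ℕ} [NeZero N] (ω : ℕ → Bool) (xs : Fin T → Arrival N) :
    Monotone (loads ω xs) := by
  refine monotone_nat_of_le_succ fun t i => ?_
  by_cases h : t < T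
  · rw [loads_succ ω xs h]
    unfold greedyStep
    dsimp only
    generalize (if ((xs ⟨t, h⟩).1 && ω t) = true then _ else _) = b
    split_ifs
    · exact Nat.le_succ _
    · exact le_rfl
  · simp [loads, greedyLoads, h]

/-- Average out the arrival at step `t` in the presence of a weight `H` ignoring it. -/
lemma expec_step {N T : ℕ} [NeZero N] (hN : 2 ≤ N) (q : ℝ) (ω : ℕ → Bool) {t : ℕ} (h : t < T)
    (H : (Fin T → Arrival N) → ℝ) (hH : ∀ xs a, H (Function.update xs ⟨t, h⟩ a) = H xs)
    (φ : (Fin N → ℕ) → ℝ) :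
    expec N T q (fun xs => H xs * φ (loads ω xs (t + 1))) =
      expec N T q (fun xs => H xs *
        ∑ a, arrivalProb N q a * φ (greedyStep (ω t) a (loads ω xs t))) := by
  have := expec_coord hN q ⟨t, h⟩
    (fun xs a => H xs * φ (greedyStep (ω t) a (loads ω xs t))) (by
      intro xs a b
      simp only [hH]
      rw [loads_update ω xs ⟨t, h⟩ b t le_rfl])
  simp only [loads_succ ω _ h]
  rw [this]
  congr 1
  funext xs
  rw [Finset.mul_sum]
  exact Finset.sum_congr rfl fun a _ => by ring

/-- Exponential moment of a pairwise difference while no ball is flexed. -/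
lemma expMoment_noflex {N T : ℕ} [NeZero N] (hN : 2 ≤ N) {q : ℝ} (hq0 : 0 < q) (hq1 : q ≤ 1)
    (ω : ℕ → Bool) (i j : Fin N) {lam : ℝ} (h0 : 0 ≤ lam) (h1 : lam ≤ 1) (t : ℕ) (ht : t ≤ T)
    (hω : ∀ s < t, ω s = false) :
    expec N T q (fun xs => Real.exp (lam * pairDiff i j (loads ω xs t))) ≤
      (1 + lam ^ 2) ^ t := by
  induction t with
  | zero =>
    simp [loads, greedyLoads, pairDiff, expec_const hN]
  | succ t ih =>
    have hT : t < T := by omega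
    have h := expec_step hN q ω hT (fun _ => 1) (fun _ _ => rfl)
      (fun x => Real.exp (lam * pairDiff i j x))
    simp only [one_mul] at h
    rw [h, hω t (by omega), pow_succ]
    calc _ ≤ expec N T q (fun xs => Real.exp (lam * pairDiff i j (loads ω xs t)) *
            (1 + lam ^ 2)) :=
          expec_mono hq0 hq1 fun xs => expMoment_step_noflex hN hq0 hq1 _ i j h0 h1
      _ = expec N T q (fun xs => Real.exp (lam * pairDiff i j (loads ω xs t))) *
            (1 + lam ^ 2) := expec_mul_const _ _ _
      _ ≤ _ := mul_le_mul_of_nonneg_right (ih (by omega) fun s hs => hω s (by omega))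
            (by positivity)

lemma tail_noflex {N T : ℕ} [NeZero N] (hN : 2 ≤ N) {q : ℝ} (hq0 : 0 < q) (hq1 : q ≤ 1)
    (ω : ℕ → Bool) (i j : Fin N) {lam : ℝ} (h0 : 0 ≤ lam) (h1 : lam ≤ 1) (t : ℕ) (ht : t ≤ T)
    (hω : ∀ s < t, ω s = false) (b : ℝ) :
    expec N T q (fun xs => if b ≤ pairDiff i j (loads ω xs t) then 1 else 0) ≤
      Real.exp (lam ^ 2 * t - lam * b) := by
  calc _ ≤ expec N T q (fun xs => Real.exp (lam * pairDiff i j (loads ω xs t)) *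
            Real.exp (-(lam * b))) := by
        refine expec_mono hq0 hq1 fun xs => ?_
        rw [← Real.exp_add]
        split_ifs with h
        · rw [← Real.exp_zero]
          exact Real.exp_le_exp.2 (by nlinarith)
        · exact (Real.exp_pos _).le
    _ = _ := expec_mul_const _ _ _
    _ ≤ (1 + lam ^ 2) ^ t * Real.exp (-(lam * b)) :=
        mul_le_mul_of_nonneg_right (expMoment_noflex hN hq0 hq1 ω i j h0 h1 t ht hω)
          (Real.exp_pos _).le
    _ ≤ Real.exp (lam ^ 2) ^ t * Real.exp (-(lam * b)) := by
        refine mul_le_mul_of_nonneg_right ?_ (Real.exp_pos _).le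
        refine pow_le_pow_left₀ (by positivity) ?_ _
        linarith [Real.add_one_le_exp (lam ^ 2)]
    _ = _ := by
        rw [← Real.exp_nat_mul, ← Real.exp_add]
        congr 1
        ring

/-- Exponential moment of a pairwise difference `s` steps into the flexing window, on the event
that the difference was at most `M` when the window opened at `t₀`. -/
lemma expMoment_flex {N T : ℕ} [NeZero N] (hN : 2 ≤ N) {q : ℝ} (hq0 : 0 < q) (hq1 : q ≤ 1)
    (ω : ℕ → Bool) (i j : Fin N) (t₀ : ℕ) (hω : ∀ s, t₀ ≤ s → ω s = true) (M : ℝ) (s : ℕ)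
    (hs : t₀ + s ≤ T) :
    expec N T q (fun xs => (if pairDiff i j (loads ω xs t₀) ≤ M then 1 else 0) *
        Real.exp (rateA N q * pairDiff i j (loads ω xs (t₀ + s)))) ≤
      (1 - rateA N q ^ 2) ^ s * Real.exp (rateA N q * M) + Real.exp 1 / rateA N q ^ 2 := by
  have hpos := rateA_pos hN hq0
  have hhalf := rateA_le_half hN hq1
  set α := rateA N q with hα
  have hα2 : 0 ≤ 1 - α ^ 2 := by nlinarith
  have hC : 0 < Real.exp 1 / α ^ 2 := by positivity
  induction s with
  | zero =>
    calc _ ≤ expec N T q (fun _ => Real.exp (α * M)) := by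
          refine expec_mono hq0 hq1 fun xs => ?_
          split_ifs with h
          · rw [one_mul, add_zero]
            exact Real.exp_le_exp.2 (by nlinarith)
          · rw [zero_mul]; exact (Real.exp_pos _).le
      _ = Real.exp (α * M) := expec_const hN _ _
      _ ≤ _ := by rw [pow_zero, one_mul]; linarith
  | succ s ih =>
    have hT : t₀ + s < T := by omega
    have h := expec_step hN q ω hT
      (fun xs => (if pairDiff i j (loads ω xs t₀) ≤ M then 1 else 0)) (by
        intro xs a
        rw [loads_update ω xs ⟨t₀ + s, hT⟩ a t₀ (by simp)])
      (fun x => Real.exp (α * pairDiff i j x))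
    rw [← add_assoc, h, hω _ (by omega)]
    calc _ ≤ expec N T q (fun xs => (if pairDiff i j (loads ω xs t₀) ≤ M then 1 else 0) *
              Real.exp (α * pairDiff i j (loads ω xs (t₀ + s))) * (1 - α ^ 2) +
              Real.exp 1) := by
          refine expec_mono hq0 hq1 fun xs => ?_
          have := expMoment_step_flex hN hq0 hq1 (loads ω xs (t₀ + s)) i j
          split_ifs with h
          · simp only [one_mul]; linarith
          · simp only [zero_mul, zero_add]; exact (Real.exp_pos _).le
      _ = _ * (1 - α ^ 2) + Real.exp 1 := by
          rw [expec_add, expec_mul_const, expec_const hN]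
      _ ≤ ((1 - α ^ 2) ^ s * Real.exp (α * M) + Real.exp 1 / α ^ 2) * (1 - α ^ 2) +
            Real.exp 1 := by
          have := mul_le_mul_of_nonneg_right (ih (by omega)) hα2
          linarith
      _ = _ := by
          rw [pow_succ]
          field_simp
          ring

/-! ### Tail bound for pairwise differences under the late schedule -/

lemma rateA_mul_csOpaque {N : ℕ} (hN : 2 ≤ N) {q : ℝ} (hq0 : 0 < q) :
    5 ≤ rateA N q * csOpaque N q := by
  have h2 : (2 : ℝ) ≤ N := by exact_mod_cast hN
  have hpos := rateA_pos hN hq0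
  have h6 : 2 ≤ Real.sqrt 6 := Real.le_sqrt_of_sq_le (by norm_num)
  have h1 : rateA N q * (2 * Real.sqrt 6 * (N : ℝ) * ((N : ℝ) - 1) * ((N : ℝ) + 1) / q) =
      2 * Real.sqrt 6 * ((N : ℝ) + 1) := by
    rw [rateA_eq hN]
    have : (N : ℝ) - 1 ≠ 0 := by linarith
    field_simp
  unfold csOpaque
  rw [mul_add, h1]
  have : 0 ≤ rateA N q * (4 * (N : ℝ)) := by positivity
  nlinarith

lemma csOpaque_ge {N : ℕ} (hN : 2 ≤ N) {q : ℝ} (hq0 : 0 < q) :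
    4 * (N : ℝ) ≤ csOpaque N q := by
  have h2 : (2 : ℝ) ≤ N := by exact_mod_cast hN
  have : 0 ≤ (N : ℝ) - 1 := by linarith
  unfold csOpaque
  have : 0 ≤ 2 * Real.sqrt 6 * (N : ℝ) * ((N : ℝ) - 1) * ((N : ℝ) + 1) / q := by positivity
  linarith

/-- The unflexed process exceeds `4Tr`, where `T r² = log T`, with probability at most `1/T`. -/
lemma tail_start {N T : ℕ} [NeZero N] (hN : 2 ≤ N) {q : ℝ} (hq0 : 0 < q) (hq1 : q ≤ 1)
    (ω : ℕ → Bool) (i j : Fin N) (hT : 1 ≤ T) {r : ℝ} (hr : 0 < r)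
    (hr2 : (T : ℝ) * r ^ 2 = Real.log T) (hrα : r ≤ rateA N q) (t : ℕ) (ht : t ≤ T)
    (hω : ∀ s < t, ω s = false) :
    expec N T q (fun xs => if 4 * (T * r) ≤ pairDiff i j (loads ω xs t) then 1 else 0) ≤
      1 / (T : ℝ) := by
  have hhalf := rateA_le_half hN hq1
  have hTR : (1 : ℝ) ≤ T := by exact_mod_cast hT
  have htR : (t : ℝ) ≤ T := by exact_mod_cast ht
  have hlog : 0 ≤ Real.log T := Real.log_nonneg hTR
  refine (tail_noflex hN hq0 hq1 ω i j (lam := 2 * r) (by linarith) (by linarith) t ht hω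
    _).trans ?_
  have : 1 / (T : ℝ) = Real.exp (-Real.log T) := by
    rw [Real.exp_neg, Real.exp_log (by linarith), one_div]
  rw [this]
  refine Real.exp_le_exp.2 ?_
  have h1 : r ^ 2 * (t : ℝ) ≤ Real.log T := by
    rw [← hr2, mul_comm]
    exact mul_le_mul_of_nonneg_right htR (sq_nonneg r)
  have h2 : (2 * r) ^ 2 * (t : ℝ) - 2 * r * (4 * (T * r)) =
      4 * (r ^ 2 * t) - 8 * (T * r ^ 2) := by ring
  rw [h2, hr2]
  linarith

/-- Tail bound for a pairwise difference at every time `t < T`, at the level `(T - t)/N` needed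
for some bin to be full. -/
lemma tail_pair {N T : ℕ} [NeZero N] (hN : 2 ≤ N) {q : ℝ} (hq0 : 0 < q) (hq1 : q ≤ 1)
    (ω : ℕ → Bool) (i j : Fin N) (hT : 1 ≤ T) {r : ℝ} (hr : 0 < r)
    (hr2 : (T : ℝ) * r ^ 2 = Real.log T) (hrα : r ≤ rateA N q) (t₀ : ℕ)
    (ht₀ : (t₀ : ℝ) ≤ T - csOpaque N q * (T * r))
    (hω0 : ∀ s < t₀, ω s = false) (hω1 : ∀ s, t₀ ≤ s → ω s = true) (t : ℕ) (ht : t < T) :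
    expec N T q (fun xs => if ((T : ℝ) - t) / N ≤ pairDiff i j (loads ω xs t) then 1 else 0) ≤
      2 / (T : ℝ) + Real.exp 1 / rateA N q ^ 2 * Real.exp (-(rateA N q * (((T : ℝ) - t) / N))) := by
  have hpos := rateA_pos hN hq0
  have hhalf := rateA_le_half hN hq1
  have hαN := rateA_le hN hq1
  have hαc := rateA_mul_csOpaque hN hq0
  have hc := csOpaque_ge hN hq0
  set α := rateA N q with hα
  set c := csOpaque N q with hcdef
  have hTR : (1 : ℝ) ≤ T := by exact_mod_cast hT
  have h2 : (2 : ℝ) ≤ N := by exact_mod_cast hN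
  have hTr : 0 < (T : ℝ) * r := by positivity
  have hC : 0 < Real.exp 1 / α ^ 2 * Real.exp (-(α * (((T : ℝ) - t) / N))) := by positivity
  have hT1 : 0 < 1 / (T : ℝ) := by positivity
  have h2T : 2 / (T : ℝ) = 1 / T + 1 / T := by ring
  have ht0T : t₀ ≤ T := by
    have : (t₀ : ℝ) ≤ T := by
      have : 0 ≤ c * (T * r) := by nlinarith
      linarith
    exact_mod_cast this
  rcases le_or_gt t t₀ with htt | htt
  · have htR : (t : ℝ) ≤ t₀ := by exact_mod_cast htt
    have hlev : 4 * (T * r) ≤ ((T : ℝ) - t) / N := by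
      rw [le_div_iff₀ (by linarith)]
      nlinarith
    have h1 : expec N T q (fun xs => if ((T : ℝ) - t) / N ≤ pairDiff i j (loads ω xs t)
        then 1 else 0) ≤
        expec N T q (fun xs => if 4 * (T * r) ≤ pairDiff i j (loads ω xs t) then 1 else 0) := by
      refine expec_mono hq0 hq1 fun xs => ?_
      split_ifs with ha hb
      · exact le_rfl
      · exact absurd (hlev.trans ha) hb
      · norm_num
      · exact le_rfl
    have h3 := tail_start hN hq0 hq1 ω i j hT hr hr2 hrα t ht.le
      (fun s hs => hω0 s (by omega))
    linarith
  · obtain ⟨s, rfl⟩ := Nat.exists_eq_add_of_le htt.le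
    have hst := tail_start hN hq0 hq1 ω i j hT hr hr2 hrα t₀ ht0T hω0
    have hfl := expMoment_flex hN hq0 hq1 ω i j t₀ hω1 (4 * (T * r)) s ht.le
    rw [← hα] at hfl
    set u : ℝ := (T : ℝ) - ((t₀ + s : ℕ) : ℝ) with hu
    have hu0 : 0 < u := by
      have : ((t₀ + s : ℕ) : ℝ) < T := by exact_mod_cast ht
      linarith
    have hsum : c * (T * r) ≤ s + u := by rw [hu]; push_cast; linarith
    have hsplit : expec N T q (fun xs => if u / N ≤ pairDiff i j (loads ω xs (t₀ + s))
        then 1 else 0) ≤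
        expec N T q (fun xs => (if 4 * (T * r) ≤ pairDiff i j (loads ω xs t₀) then 1 else 0) +
          (if pairDiff i j (loads ω xs t₀) ≤ 4 * (T * r) then 1 else 0) *
          Real.exp (α * pairDiff i j (loads ω xs (t₀ + s))) * Real.exp (-(α * (u / N)))) := by
      refine expec_mono hq0 hq1 fun xs => ?_
      rw [mul_assoc, ← Real.exp_add]
      have he := Real.exp_pos (α * pairDiff i j (loads ω xs (t₀ + s)) + -(α * (u / N)))
      by_cases hb : 4 * (T * r) ≤ pairDiff i j (loads ω xs t₀)
      · rw [if_pos hb]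
        have h1 : (if u / N ≤ pairDiff i j (loads ω xs (t₀ + s)) then (1 : ℝ) else 0) ≤ 1 := by
          split_ifs <;> norm_num
        have h2 : (0 : ℝ) ≤ if pairDiff i j (loads ω xs t₀) ≤ 4 * (T * r) then 1 else 0 := by
          split_ifs <;> norm_num
        linarith [mul_nonneg h2 he.le]
      · rw [if_neg hb, if_pos (not_le.1 hb).le, zero_add, one_mul]
        split_ifs with h
        · have h1 := mul_le_mul_of_nonneg_left h hpos.le
          exact Real.one_le_exp (by linarith)
        · exact he.le
    rw [expec_add, expec_mul_const] at hsplit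
    have hmul := mul_le_mul_of_nonneg_right hfl (Real.exp_pos (-(α * (u / N)))).le
    rw [add_mul] at hmul
    have hdecay : (1 - α ^ 2) ^ s * Real.exp (α * (4 * (T * r))) * Real.exp (-(α * (u / N))) ≤
        1 / T := by
      have hα2 : 0 ≤ 1 - α ^ 2 := by nlinarith
      have h1 : (1 - α ^ 2) ^ s ≤ Real.exp (-(α ^ 2 * s)) := by
        have : (1 - α ^ 2) ≤ Real.exp (-α ^ 2) := by
          linarith [Real.add_one_le_exp (-α ^ 2)]
        calc _ ≤ Real.exp (-α ^ 2) ^ s := pow_le_pow_left₀ hα2 this s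
          _ = _ := by rw [← Real.exp_nat_mul]; congr 1; ring
      have hinv : 1 / (T : ℝ) = Real.exp (-Real.log T) := by
        rw [Real.exp_neg, Real.exp_log (by linarith), one_div]
      calc _ ≤ Real.exp (-(α ^ 2 * s)) * Real.exp (α * (4 * (T * r))) *
              Real.exp (-(α * (u / N))) := by gcongr
        _ = Real.exp (-(α ^ 2 * s) + α * (4 * (T * r)) + -(α * (u / N))) := by
            rw [Real.exp_add, Real.exp_add]
        _ ≤ 1 / T := by
            rw [hinv]
            refine Real.exp_le_exp.2 ?_
            -- `α ≤ 1/N`, so both the elapsed time `s` and the remaining time `u` count at rate `α²`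
            have ha : α ^ 2 * u ≤ α * (u / N) := by
              have : α * (u * α) ≤ α * (u * (1 / N)) := by gcongr
              calc α ^ 2 * u = α * (u * α) := by ring
                _ ≤ _ := this
                _ = _ := by ring
            have hb : α ^ 2 * (c * (T * r)) ≤ α ^ 2 * (s + u) := by gcongr
            have hd : 5 * (α * (T * r)) ≤ α ^ 2 * (c * (T * r)) := by
              have : 5 * (α * (T * r)) ≤ (α * c) * (α * (T * r)) := by gcongr
              linarith
            have he : Real.log T ≤ α * (T * r) := by
              rw [← hr2]
              have : r * (T * r) ≤ α * (T * r) := by gcongr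
              linarith
            linarith
    linarith

/-! ### The hitting time -/

lemma hitTime_le {N : ℕ} (T S : ℕ) (x : ℕ → Fin N → ℕ) : hitTime T S x ≤ T := by
  unfold hitTime
  split_ifs with h
  · have := Finset.min'_mem _ h
    have := Finset.mem_range.1 (Finset.mem_filter.1 this).1
    omega
  · exact le_rfl

lemma maxLoad_hitTime {N : ℕ} {T S : ℕ} {x : ℕ → Fin N → ℕ} (h : hitTime T S x < T) :
    maxLoad (x (hitTime T S x)) = S := by
  unfold hitTime at h ⊢
  split_ifs with hne
  · exact (Finset.mem_filter.1 (Finset.min'_mem _ hne)).2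
  · rw [dif_neg hne] at h
    exact absurd h (lt_irrefl _)

/-- The shortfall `T - R` counts the times before `T` at which some bin is already full. -/
lemma sub_hitTime_le {N : ℕ} (T S : ℕ) {x : ℕ → Fin N → ℕ} (hx : Monotone x) :
    (T : ℝ) - hitTime T S x ≤ ∑ t ∈ Finset.range T, if S ≤ maxLoad (x t) then (1 : ℝ) else 0 := by
  set R := hitTime T S x with hR
  have hRT : R ≤ T := hitTime_le T S x
  have hsub : Finset.Ico R T ⊆ (Finset.range T).filter fun t => S ≤ maxLoad (x t) := by
    intro t ht
    rw [Finset.mem_Ico] at ht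
    refine Finset.mem_filter.2 ⟨Finset.mem_range.2 ht.2, ?_⟩
    have h1 := maxLoad_hitTime (x := x) (T := T) (S := S) (by omega)
    rw [← hR] at h1
    calc S = maxLoad (x R) := h1.symm
      _ ≤ maxLoad (x t) := Finset.sup_mono_fun fun i _ => hx ht.1 i
  have hcard := Finset.card_le_card hsub
  rw [Nat.card_Ico, Finset.card_filter] at hcard
  have h2 : ((T - R : ℕ) : ℝ) ≤ ((∑ t ∈ Finset.range T, if S ≤ maxLoad (x t) then 1 else 0 : ℕ) : ℝ)
      := by exact_mod_cast hcard
  rw [Nat.cast_sub hRT] at h2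
  push_cast at h2
  exact h2

/-- With `T = N(S-1)+1`, if some bin is full at time `t`, then averaging over bins exhibits a pair of
bins whose difference is at least `(T - t)/N`. -/
lemma exists_pair_of_full {N S T : ℕ} [NeZero N] (hS : 1 ≤ S) (hT : T = N * (S - 1) + 1)
    {x : Fin N → ℕ} {t : ℕ} (hsum : ∑ i, x i = t) (hfull : S ≤ maxLoad x) :
    ∃ i j, ((T : ℝ) - t) / N ≤ pairDiff i j x := by
  have hN : 0 < N := Nat.pos_of_ne_zero (NeZero.ne N)
  have hNR : (1 : ℝ) ≤ N := by exact_mod_cast hN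
  obtain ⟨i, -, hi⟩ := Finset.exists_mem_eq_sup Finset.univ Finset.univ_nonempty x
  have hiS : S ≤ x i := by rw [← hi]; exact hfull
  refine ⟨i, ?_⟩
  by_contra! hcon
  have h1 : ∑ j : Fin N, pairDiff i j x < ∑ _j : Fin N, ((T : ℝ) - t) / N :=
    Finset.sum_lt_sum_of_nonempty Finset.univ_nonempty fun j _ => hcon j
  have hsumR : ∑ j : Fin N, (x j : ℝ) = t := by exact_mod_cast hsum
  simp only [pairDiff, Finset.sum_sub_distrib, hsumR, Finset.sum_const, Finset.card_univ,
    Fintype.card_fin, nsmul_eq_mul] at h1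
  have hTR : (T : ℝ) = N * ((S : ℝ) - 1) + 1 := by
    rw [hT]; push_cast [Nat.cast_sub hS]; ring
  have hiSR : (S : ℝ) ≤ x i := by exact_mod_cast hiS
  have h2 : (N : ℝ) * (((T : ℝ) - t) / N) = T - t := by field_simp
  rw [h2, hTR] at h1
  nlinarith

/-! ### Moments of the cycle length and of the discount count -/

/-- The constant bounding the expected shortfall `E[T - R]`. -/
noncomputable def shortfallConst (N : ℕ) (q : ℝ) : ℝ :=
  (N : ℝ) ^ 2 * (2 + Real.exp 1 / rateA N q ^ 2 * (1 / (1 - Real.exp (-(rateA N q / N)))))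

lemma sum_exp_remaining_le {b : ℝ} (hb : 0 < b) (T : ℕ) :
    ∑ t ∈ Finset.range T, Real.exp (-(b * ((T : ℝ) - t))) ≤ 1 / (1 - Real.exp (-b)) := by
  have hρ1 : Real.exp (-b) < 1 := Real.exp_lt_one_iff.2 (by linarith)
  have hρ0 := Real.exp_pos (-b)
  have h1 : ∑ t ∈ Finset.range T, Real.exp (-(b * ((T : ℝ) - t))) ≤
      ∑ t ∈ Finset.range T, Real.exp (-b) ^ (T - 1 - t) := by
    refine Finset.sum_le_sum fun t ht => ?_
    have ht := Finset.mem_range.1 ht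
    rw [← Real.exp_nat_mul]
    refine Real.exp_le_exp.2 ?_
    have h : ((T - 1 - t : ℕ) : ℝ) = (T : ℝ) - t - 1 := by
      rw [Nat.sub_sub, Nat.cast_sub (by omega)]; push_cast; ring
    rw [h]
    nlinarith
  rw [Finset.sum_range_reflect (fun k => Real.exp (-b) ^ k)] at h1
  refine h1.trans ?_
  rw [le_div_iff₀ (by linarith), mul_comm, mul_neg_geom_sum]
  have : 0 < Real.exp (-b) ^ T := by positivity
  linarith

/-- The expected cycle length is within a constant of the horizon `T = N(S-1)+1`. -/
lemma expec_hitTime_ge {N S T : ℕ} [NeZero N] (hN : 2 ≤ N) {q : ℝ} (hq0 : 0 < q) (hq1 : q ≤ 1)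
    (hS : 1 ≤ S) (hTS : T = N * (S - 1) + 1)
    (ω : ℕ → Bool) {r : ℝ} (hr : 0 < r)
    (hr2 : (T : ℝ) * r ^ 2 = Real.log T) (hrα : r ≤ rateA N q) (t₀ : ℕ)
    (ht₀ : (t₀ : ℝ) ≤ T - csOpaque N q * (T * r))
    (hω0 : ∀ s < t₀, ω s = false) (hω1 : ∀ s, t₀ ≤ s → ω s = true) :
    (T : ℝ) - shortfallConst N q ≤
      expec N T q (fun xs => (hitTime T S (loads ω xs) : ℝ)) := by
  have hT : 1 ≤ T := by omega
  have hpos := rateA_pos hN hq0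
  have hNR : (2 : ℝ) ≤ N := by exact_mod_cast hN
  set C := Real.exp 1 / rateA N q ^ 2 with hC
  have hC0 : 0 < C := by positivity
  have hpt : ∀ xs : Fin T → Arrival N, (T : ℝ) ≤ (hitTime T S (loads ω xs) : ℝ) +
      ∑ t ∈ Finset.range T, ∑ i : Fin N, ∑ j : Fin N,
        if ((T : ℝ) - t) / N ≤ pairDiff i j (loads ω xs t) then (1 : ℝ) else 0 := by
    intro xs
    have h1 := sub_hitTime_le T S (loads_mono ω xs)
    have h2 : ∑ t ∈ Finset.range T, (if S ≤ maxLoad (loads ω xs t) then (1 : ℝ) else 0) ≤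
        ∑ t ∈ Finset.range T, ∑ i : Fin N, ∑ j : Fin N,
        if ((T : ℝ) - t) / N ≤ pairDiff i j (loads ω xs t) then (1 : ℝ) else 0 := by
      refine Finset.sum_le_sum fun t ht => ?_
      have ht := Finset.mem_range.1 ht
      have hnn : ∀ i j : Fin N, (0 : ℝ) ≤
          if ((T : ℝ) - t) / N ≤ pairDiff i j (loads ω xs t) then (1 : ℝ) else 0 := by
        intro i j; split_ifs <;> norm_num
      by_cases hfull : S ≤ maxLoad (loads ω xs t)
      · rw [if_pos hfull]
        obtain ⟨i, j, hij⟩ := exists_pair_of_full hS hTS (sum_loads ω xs ht.le) hfull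
        calc (1 : ℝ) = if ((T : ℝ) - t) / N ≤ pairDiff i j (loads ω xs t) then (1 : ℝ) else 0 := by
              rw [if_pos hij]
          _ ≤ ∑ j' : Fin N, if ((T : ℝ) - t) / N ≤ pairDiff i j' (loads ω xs t)
                then (1 : ℝ) else 0 :=
              Finset.single_le_sum
                (f := fun j' => if ((T : ℝ) - t) / N ≤ pairDiff i j' (loads ω xs t)
                  then (1 : ℝ) else 0) (fun j' _ => hnn i j') (Finset.mem_univ j)
          _ ≤ _ := Finset.single_le_sum
                (f := fun i' => ∑ j' : Fin N, if ((T : ℝ) - t) / N ≤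
                  pairDiff i' j' (loads ω xs t) then (1 : ℝ) else 0)
                (fun i' _ => Finset.sum_nonneg fun j' _ => hnn i' j') (Finset.mem_univ i)
      · rw [if_neg hfull]
        exact Finset.sum_nonneg fun i _ => Finset.sum_nonneg fun j _ => hnn i j
    linarith
  have hE := expec_mono (N := N) (T := T) hq0 hq1 hpt
  rw [expec_const hN, expec_add, expec_sum] at hE
  simp only [expec_sum] at hE
  have hbound : ∑ t ∈ Finset.range T, ∑ i : Fin N, ∑ j : Fin N,
      expec N T q (fun xs => if ((T : ℝ) - t) / N ≤ pairDiff i j (loads ω xs t) then 1 else 0) ≤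
      shortfallConst N q := by
    calc _ ≤ ∑ t ∈ Finset.range T, ∑ _i : Fin N, ∑ _j : Fin N,
            (2 / (T : ℝ) + C * Real.exp (-(rateA N q * (((T : ℝ) - t) / N)))) := by
          refine Finset.sum_le_sum fun t ht => Finset.sum_le_sum fun i _ =>
            Finset.sum_le_sum fun j _ => ?_
          exact tail_pair hN hq0 hq1 ω i j hT hr hr2 hrα t₀ ht₀ hω0 hω1 t (Finset.mem_range.1 ht)
      _ = (N : ℝ) ^ 2 * (2 + C * ∑ t ∈ Finset.range T,
            Real.exp (-(rateA N q / N * ((T : ℝ) - t)))) := by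
          have hTR : (T : ℝ) ≠ 0 := by positivity
          simp only [Finset.sum_const, Finset.card_univ, Fintype.card_fin, nsmul_eq_mul]
          rw [← Finset.mul_sum, ← Finset.mul_sum, Finset.sum_add_distrib, ← Finset.mul_sum,
            Finset.sum_const, Finset.card_range, nsmul_eq_mul, mul_div_cancel₀ _ hTR]
          have : ∀ t : ℕ, rateA N q * (((T : ℝ) - t) / N) = rateA N q / N * ((T : ℝ) - t) :=
            fun t => by ring
          simp only [this]
          ring
      _ ≤ shortfallConst N q := by
          unfold shortfallConst
          have := sum_exp_remaining_le (b := rateA N q / N) (by positivity) T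
          gcongr
  linarith

/-- At most `T - t₀` balls may be flexed, and each is a flex ball with probability `q`. -/
lemma expec_cycleFlexCount_le {N S T : ℕ} [NeZero N] (hN : 2 ≤ N) {q : ℝ} (hq0 : 0 < q)
    (hq1 : q ≤ 1) (ω : ℕ → Bool) (t₀ : ℕ) (ht₀ : t₀ ≤ T) (hω0 : ∀ s < t₀, ω s = false) :
    expec N T q (fun xs => (cycleFlexCount N T (fun _ s _ => ω s) S xs : ℝ)) ≤
      q * ((T : ℝ) - t₀) := by
  have hpt : ∀ xs : Fin T → Arrival N, (cycleFlexCount N T (fun _ s _ => ω s) S xs : ℝ) ≤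
      ∑ t ∈ Finset.Ico t₀ T, if h : t < T then (if (xs ⟨t, h⟩).1 then (1 : ℝ) else 0) else 0 := by
    intro xs
    unfold cycleFlexCount
    push_cast
    have hsub : Finset.range (hitTime T S (greedyLoads (fun _ s _ => ω s) xs)) ⊆
        Finset.range T := Finset.range_subset_range.2 (hitTime_le _ _ _)
    refine (Finset.sum_le_sum_of_subset_of_nonneg hsub fun t _ _ => ?_).trans ?_
    · split_ifs <;> norm_num
    · rw [← Finset.sum_range_add_sum_Ico _ ht₀]
      rw [Finset.sum_eq_zero (s := Finset.range t₀) fun t ht => by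
        simp [hω0 t (Finset.mem_range.1 ht)], zero_add]
      refine Finset.sum_le_sum fun t ht => ?_
      have hT := (Finset.mem_Ico.1 ht).2
      rw [dif_pos hT, dif_pos hT]
      by_cases hf : (xs ⟨t, hT⟩).1 = true
      · rw [if_pos hf]
        split_ifs <;> norm_num
      · simp [hf]
  refine (expec_mono hq0 hq1 hpt).trans ?_
  rw [expec_sum]
  have hone : ∀ t ∈ Finset.Ico t₀ T, expec N T q (fun xs => if h : t < T then
      (if (xs ⟨t, h⟩).1 then (1 : ℝ) else 0) else 0) = q := by
    intro t ht
    have hT := (Finset.mem_Ico.1 ht).2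
    simp only [dif_pos hT]
    have h := expec_coord hN q ⟨t, hT⟩ (fun _ a => if a.1 then (1 : ℝ) else 0) (fun _ _ _ => rfl)
    rw [h, expec_const hN, sum_arrivalProb_mul]
    simp only [if_true, Bool.false_eq_true, if_false, mul_one, mul_zero, Finset.sum_const_zero,
      sum_flexSet_weight hN, add_zero]
    have : (N : ℝ) ≠ 0 := by positivity
    simp [this]
  rw [Finset.sum_congr rfl hone, Finset.sum_const, Nat.card_Ico, nsmul_eq_mul,
    Nat.cast_sub ht₀, mul_comm]

lemma expec_sq_ge {N T : ℕ} (hN : 2 ≤ N) {q : ℝ} (hq0 : 0 < q) (hq1 : q ≤ 1)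
    (X : (Fin T → Arrival N) → ℝ) :
    expec N T q X ^ 2 ≤ expec N T q (fun xs => X xs ^ 2) := by
  set m := expec N T q X with hm
  have h := expec_nonneg (N := N) (T := T) hq0 hq1 (X := fun xs => (X xs - m) ^ 2)
    (fun xs => sq_nonneg _)
  have h2 : (fun xs => (X xs - m) ^ 2) = fun xs => X xs ^ 2 + (X xs * (-2 * m) + m ^ 2) := by
    funext xs; ring
  rw [h2, expec_add, expec_add, expec_mul_const, expec_const hN, ← hm] at h
  linarith

/-- Both moment bounds for the static policy, for all large `S`. -/
lemma static_moments {N : ℕ} [NeZero N] (hN : 2 ≤ N) {q : ℝ} (hq0 : 0 < q) (hq1 : q ≤ 1) :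
    ∃ S₁ : ℕ, ∀ S : ℕ, S₁ ≤ S →
      (N : ℝ) * S - (shortfallConst N q + N) ≤ staticER N q S ∧
      staticED N q S ≤ q * (csOpaque N q *
        Real.sqrt (((N * (S - 1) + 1 : ℕ) : ℝ) * Real.log ((N * (S - 1) + 1 : ℕ) : ℝ)) + 1) := by
  have hpos := rateA_pos hN hq0
  have hc := csOpaque_ge hN hq0
  have hNR : (2 : ℝ) ≤ N := by exact_mod_cast hN
  set c := csOpaque N q with hcdef
  have hc0 : 0 < c := by linarith
  set η := min (rateA N q) (1 / (2 * c)) with hη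
  have hη0 : 0 < η := lt_min hpos (by positivity)
  have hlim : Filter.Tendsto (fun x : ℝ => Real.log x / x) Filter.atTop (nhds 0) :=
    Real.isLittleO_log_id_atTop.tendsto_div_nhds_zero
  obtain ⟨X, hX⟩ := Filter.eventually_atTop.1
    (hlim.eventually (Iio_mem_nhds (show (0 : ℝ) < η ^ 2 by positivity)))
  refine ⟨max 2 ⌈X⌉₊, fun S hS => ?_⟩
  have hS2 : 2 ≤ S := (le_max_left _ _).trans hS
  have hSX : X ≤ S := (Nat.le_ceil X).trans (by exact_mod_cast (le_max_right _ _).trans hS)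
  unfold staticER staticED
  rw [← hcdef]
  generalize hT : N * (S - 1) + 1 = T
  have hTS : S ≤ T := by
    have : 1 * (S - 1) ≤ N * (S - 1) := Nat.mul_le_mul_right _ (by omega)
    omega
  have hTSR : (S : ℝ) ≤ T := by exact_mod_cast hTS
  have hT2 : (2 : ℝ) ≤ T := by exact_mod_cast hS2.trans hTS
  have hlogpos : 0 < Real.log T := Real.log_pos (by linarith)
  set r := Real.sqrt (Real.log T / T) with hrdef
  have hr : 0 < r := Real.sqrt_pos.2 (by positivity)
  have hrsq : r ^ 2 = Real.log T / T := Real.sq_sqrt (by positivity)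
  have hr2 : (T : ℝ) * r ^ 2 = Real.log T := by rw [hrsq]; field_simp
  have hrη : r ≤ η := by
    rw [hrdef]
    exact Real.sqrt_le_iff.2 ⟨hη0.le, (hX T (hSX.trans hTSR)).le⟩
  have hL : Real.sqrt ((T : ℝ) * Real.log T) = T * r := by
    rw [← hr2, show (T : ℝ) * (T * r ^ 2) = (T * r) ^ 2 by ring]
    exact Real.sqrt_sq (by positivity)
  have hrα : r ≤ rateA N q := hrη.trans (min_le_left _ _)
  have hcr : c * (T * r) ≤ T / 2 := by
    have h1 : r ≤ 1 / (2 * c) := hrη.trans (min_le_right _ _)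
    calc c * (T * r) ≤ c * (T * (1 / (2 * c))) := by gcongr
      _ = T / 2 := by field_simp
  -- the window opens at step index `t₀`, the least `s` with `T - c√(T log T) ≤ s + 1`
  set t₀ := ⌈(T : ℝ) - c * (T * r) - 1⌉₊ with ht₀def
  have hnn : 0 ≤ (T : ℝ) - c * (T * r) - 1 := by linarith
  have ht₀ : (t₀ : ℝ) ≤ T - c * (T * r) := by
    have := Nat.ceil_lt_add_one hnn
    linarith
  have ht₀' : (T : ℝ) - c * (T * r) - 1 ≤ t₀ := Nat.le_ceil _
  have ht₀T : t₀ ≤ T := by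
    have : (t₀ : ℝ) ≤ T := by
      have : 0 ≤ c * (T * r) := by positivity
      linarith
    exact_mod_cast this
  obtain ⟨ω, hω⟩ : ∃ ω : ℕ → Bool, ω = fun s : ℕ => if (T : ℝ) - c * Real.sqrt ((T : ℝ) *
    Real.log (T : ℝ)) ≤ ((s : ℝ) + 1) then true else false := ⟨_, rfl⟩
  have hdec : lateDec N T c = fun _ s _ => ω s := by rw [hω]; rfl
  have hω0 : ∀ s < t₀, ω s = false := by
    intro s hs
    have := Nat.lt_ceil.1 hs
    rw [hω]
    simp only [hL]
    rw [if_neg (by linarith)]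
  have hω1 : ∀ s, t₀ ≤ s → ω s = true := by
    intro s hs
    have := Nat.ceil_le.1 hs
    rw [hω]
    simp only [hL]
    rw [if_pos (by linarith)]
  rw [hdec, hL]
  refine ⟨?_, ?_⟩
  · have h := expec_hitTime_ge hN hq0 hq1 (by omega) hT.symm ω hr hr2 hrα t₀ ht₀ hω0 hω1
    have hTR : (T : ℝ) = N * ((S : ℝ) - 1) + 1 := by
      rw [← hT]; push_cast [Nat.cast_sub (show 1 ≤ S by omega)]; ring
    refine le_trans ?_ h
    rw [hTR]
    linarith
  · refine (expec_cycleFlexCount_le hN hq0 hq1 ω t₀ ht₀T hω0).trans ?_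
    refine mul_le_mul_of_nonneg_left ?_ hq0.le
    linarith

lemma shortfallConst_pos {N : ℕ} (hN : 2 ≤ N) {q : ℝ} (hq0 : 0 < q) : 0 < shortfallConst N q := by
  have hpos := rateA_pos hN hq0
  have h : Real.exp (-(rateA N q / N)) < 1 := Real.exp_lt_one_iff.2 (by
    have : 0 < rateA N q / N := by positivity
    linarith)
  have h' : 0 < 1 - Real.exp (-(rateA N q / N)) := by linarith
  unfold shortfallConst
  positivity

/-- **Corollary 1** (cost upper bound for the static opaque selling policy): there exist
constants `θ, c > 0` (depending only on `N, q`) and `S₀` such that for all `S ≥ S₀` and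
all `K > 0`, `h > 0`, `δ ∈ [0,1)`:
`C^s ≤ K/(NS - θ) + (h/2)(NS + 1 + θ) + δ q c √((log S)/S)`. -/
theorem static_opaque_cost_bound (N : ℕ) [NeZero N] (hN : 2 ≤ N) (q : ℝ)
    (hq0 : 0 < q) (hq1 : q ≤ 1) :
    ∃ θ : ℝ, 0 < θ ∧ ∃ c : ℝ, 0 < c ∧ ∃ S₀ : ℕ, ∀ S : ℕ, S₀ ≤ S →
      ∀ K h δ : ℝ, 0 < K → 0 < h → 0 ≤ δ → δ < 1 →
        staticCost N q K h δ S ≤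
          K / ((N : ℝ) * (S : ℝ) - θ) + (h / 2) * ((N : ℝ) * (S : ℝ) + 1 + θ) +
            δ * q * c * Real.sqrt (Real.log (S : ℝ) / (S : ℝ)) := by
  have hNR : (2 : ℝ) ≤ N := by exact_mod_cast hN
  have hc := csOpaque_ge hN hq0
  have hsc := shortfallConst_pos hN hq0
  obtain ⟨S₁, hS₁⟩ := static_moments hN hq0 hq1
  set θ := shortfallConst N q + N with hθ
  have hθ0 : 0 < θ := by linarith
  set c := csOpaque N q with hcdef
  have hc0 : 0 < c + 1 := by linarith
  refine ⟨θ, hθ0, 2 * (c + 1) * Real.sqrt (2 * N) / N, by positivity,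
    max (max S₁ (max N 3)) ⌈2 * θ⌉₊, fun S hS K h δ hK hh hδ0 hδ1 => ?_⟩
  have hSS₁ : S₁ ≤ S := ((le_max_left _ _).trans (le_max_left _ _)).trans hS
  have hSN3 : max N 3 ≤ S := ((le_max_right _ _).trans (le_max_left _ _)).trans hS
  have hSN : N ≤ S := (le_max_left _ _).trans hSN3
  have hS3 : 3 ≤ S := (le_max_right _ _).trans hSN3
  have hSθ : 2 * θ ≤ S := (Nat.le_ceil _).trans (by exact_mod_cast (le_max_right _ _).trans hS)
  obtain ⟨hR, hD⟩ := hS₁ S hSS₁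
  have hSNR : (N : ℝ) ≤ S := by exact_mod_cast hSN
  have hS3R : (3 : ℝ) ≤ S := by exact_mod_cast hS3
  have hNS : (N : ℝ) * S / 2 ≤ N * S - θ := by nlinarith
  have hNSpos : 0 < (N : ℝ) * S / 2 := by positivity
  set ER := staticER N q S with hER
  have hER0 : 0 < ER := by linarith
  have hsq : ER ^ 2 ≤ staticER2 N q S := expec_sq_ge hN hq0 hq1 _
  have hK1 : K / ER ≤ K / ((N : ℝ) * S - θ) :=
    div_le_div_of_nonneg_left hK.le (by linarith) hR
  have hh1 : (h / 2) * (2 * (N : ℝ) * S + 1 - staticER2 N q S / ER) ≤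
      (h / 2) * ((N : ℝ) * S + 1 + θ) := by
    have : ER ≤ staticER2 N q S / ER := by
      rw [le_div_iff₀ hER0]; linarith [sq ER]
    refine mul_le_mul_of_nonneg_left ?_ (by linarith)
    linarith
  have hD1 : staticED N q S / ER ≤
      q * (2 * (c + 1) * Real.sqrt (2 * N) / N) * Real.sqrt (Real.log S / S) := by
    generalize hT : N * (S - 1) + 1 = T at hD
    have hTR : (T : ℝ) = N * ((S : ℝ) - 1) + 1 := by
      rw [← hT]; push_cast [Nat.cast_sub (show 1 ≤ S by omega)]; ring
    have hTle : (T : ℝ) ≤ N * S := by rw [hTR]; linarith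
    have hT3 : (3 : ℝ) ≤ T := by rw [hTR]; nlinarith
    have hlogT1 : 1 ≤ Real.log T := by
      rw [Real.le_log_iff_exp_le (by linarith)]
      linarith [Real.exp_one_lt_three]
    have hlogS : 0 < Real.log S := Real.log_pos (by linarith)
    have hlogT : Real.log T ≤ 2 * Real.log S := by
      calc Real.log T ≤ Real.log ((S : ℝ) * S) :=
            Real.log_le_log (by linarith) (by nlinarith)
        _ = 2 * Real.log S := by rw [Real.log_mul (by positivity) (by positivity)]; ring
    have hL1 : 1 ≤ Real.sqrt ((T : ℝ) * Real.log T) :=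
      Real.one_le_sqrt.2 (by nlinarith)
    have hL2 : Real.sqrt ((T : ℝ) * Real.log T) ≤
        Real.sqrt (2 * N) * (Real.sqrt (Real.log S / S) * S) := by
      have h1 : Real.sqrt (Real.log S / S) * S = Real.sqrt (Real.log S * S) := by
        rw [show Real.log S * (S : ℝ) = Real.log S / S * (S : ℝ) ^ 2 by field_simp,
          Real.sqrt_mul (by positivity), Real.sqrt_sq (by positivity)]
      rw [h1, ← Real.sqrt_mul (by positivity)]
      refine Real.sqrt_le_sqrt ?_
      calc (T : ℝ) * Real.log T ≤ (N * S) * (2 * Real.log S) := by gcongr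
        _ = _ := by ring
    have hnum : staticED N q S ≤
        q * ((c + 1) * (Real.sqrt (2 * N) * (Real.sqrt (Real.log S / S) * S))) := by
      refine hD.trans (mul_le_mul_of_nonneg_left ?_ hq0.le)
      have : (c + 1) * Real.sqrt ((T : ℝ) * Real.log T) ≤
          (c + 1) * (Real.sqrt (2 * N) * (Real.sqrt (Real.log S / S) * S)) := by gcongr
      linarith
    rw [div_le_iff₀ hER0]
    refine hnum.trans ?_
    calc _ = q * (2 * (c + 1) * Real.sqrt (2 * N) / N) * Real.sqrt (Real.log S / S) *
            ((N : ℝ) * S / 2) := by field_simp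
      _ ≤ _ := by
          refine mul_le_mul_of_nonneg_left (hNS.trans hR) ?_
          positivity
  have hD2 : δ * staticED N q S / ER ≤
      δ * q * (2 * (c + 1) * Real.sqrt (2 * N) / N) * Real.sqrt (Real.log S / S) := by
    have := mul_le_mul_of_nonneg_left hD1 hδ0
    rw [mul_div_assoc]
    linarith
  unfold staticCost
  linarith
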